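/- Let S be a finite set of integers containing no two consecutive integers such that Σ_{i∈S} φ^i is an integer. Assume S contains at least one positive element, and let i be the smallest positive element of S. Then Σ_{k∈S, k<0} φ^k − Σ_{k∈S, k>0} φ̄^k equals 1 if i is odd, and equals 0 if i is even. -/

import Mathlib

/-- The golden ratio φ = (1+√5)/2. -/
noncomputable def goldenPhi : ℝ := (1 + Real.sqrt 5) / 2

/-- The algebraic conjugate φ̄ = (1−√5)/2. -/
noncomputable def goldenPhiBar : ℝ := (1 - Real.sqrt 5) / 2

/-!
Write `F` for the Fibonacci numbers on `ℤ`. If `x + y = 1` and `x ^ 2 = x + 1`, then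
`x ^ k = F (k + 1) - F k * y` and `y ^ k = F (k - 1) + F k * y`. Since `φ` is irrational,
integrality of `∑ φ ^ k` means `∑ F k = 0`; as `F 0 = 0`, the coefficients of `φ̄` cancel in
`∑_{k<0} φ ^ k - ∑_{k>0} φ̄ ^ k`, which is therefore an integer.

Non-consecutive powers of `φ` with exponents at most `m` sum to less than `φ ^ (m + 1)`, so the
first sum lies in `[0, 1)`. Applied to `|φ̄ ^ k| = φ ^ (-k)`, the same bound shows that the second
sum has absolute value less than `1` and the sign of its leading term `φ̄ ^ i`. Hence the difference
lies in `(0, 2)` for odd `i` and in `(-1, 1)` for even `i`.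
-/

open Finset
open scoped goldenRatio Pointwise

lemma sum_filter_neg_add_sum_filter_pos {ι M : Type*} [LinearOrder ι] [Zero ι] [AddCommMonoid M]
    (S : Finset ι) {f : ι → M} (hf : f 0 = 0) :
    ∑ k ∈ S with k < 0, f k + ∑ k ∈ S with 0 < k, f k = ∑ k ∈ S, f k := by
  rw [sum_filter, sum_filter, ← sum_add_distrib]
  refine sum_congr rfl fun k _ => ?_
  rcases lt_trichotomy k 0 with hk | rfl | hk
  · simp [hk, hk.not_gt]
  · simp [hf]
  · simp [hk, hk.not_gt]

section Fibonacci

lemma intFib_add_one_eq_fib_sub_one_add_fib (k : ℤ) :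
    Int.fib (k + 1) = Int.fib (k - 1) + Int.fib k := by
  convert Int.fib_add_two (k - 1) using 2 <;> ring_nf

variable {K : Type*} [Field K] {x y : K}

lemma zpow_eq_fib_mul_add_fib_sub_one (hx : x ^ 2 = x + 1) (k : ℤ) :
    x ^ k = Int.fib k * x + Int.fib (k - 1) := by
  have hx0 : x ≠ 0 := by rintro rfl; simp at hx
  induction k using Int.induction_on with
  | zero => simp
  | succ n ih =>
    rw [zpow_add_one₀ hx0, ih, intFib_add_one_eq_fib_sub_one_add_fib, add_sub_cancel_right]
    push_cast
    linear_combination (Int.fib n : K) * hx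
  | pred n ih =>
    have hfib : Int.fib (-n) = Int.fib (-n - 1 - 1) + Int.fib (-n - 1) := by
      simpa using intFib_add_one_eq_fib_sub_one_add_fib (-n - 1)
    rw [zpow_sub_one₀ hx0, ih, hfib, ← div_eq_mul_inv, div_eq_iff hx0]
    push_cast
    linear_combination -(Int.fib (-n - 1) : K) * hx

lemma zpow_eq_fib_add_one_sub_fib_mul (hx : x ^ 2 = x + 1) (hxy : x + y = 1) (k : ℤ) :
    x ^ k = Int.fib (k + 1) - Int.fib k * y := by
  rw [zpow_eq_fib_mul_add_fib_sub_one hx, intFib_add_one_eq_fib_sub_one_add_fib]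
  push_cast
  linear_combination (Int.fib k : K) * hxy

lemma sum_neg_zpow_sub_sum_pos_zpow_eq_intCast {S : Finset ℤ} (hx : x ^ 2 = x + 1)
    (hxy : x + y = 1) (hS : ∑ k ∈ S, Int.fib k = 0) :
    ∑ k ∈ S with k < 0, x ^ k - ∑ k ∈ S with 0 < k, y ^ k =
      ((∑ k ∈ S with k < 0, Int.fib (k + 1) - ∑ k ∈ S with 0 < k, Int.fib (k - 1) : ℤ) : K) := by
  have hy : y ^ 2 = y + 1 := by linear_combination hx + (y - x) * hxy
  have hcancel : ∑ k ∈ S with k < 0, (Int.fib k : K) + ∑ k ∈ S with 0 < k, (Int.fib k : K) = 0 := by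
    rw [sum_filter_neg_add_sum_filter_pos S (by simp), ← Int.cast_sum, hS, Int.cast_zero]
  simp only [zpow_eq_fib_add_one_sub_fib_mul hx hxy, zpow_eq_fib_mul_add_fib_sub_one hy,
    sum_add_distrib, sum_sub_distrib, ← sum_mul]
  push_cast
  linear_combination -y * hcancel

end Fibonacci

lemma sum_fib_eq_zero_of_sum_goldenRatio_zpow_eq_intCast {S : Finset ℤ} {N : ℤ}
    (hN : ∑ k ∈ S, φ ^ k = N) : ∑ k ∈ S, Int.fib k = 0 := by
  by_contra hne
  refine (Real.goldenRatio_irrational.intCast_mul hne).ne_int (N - ∑ k ∈ S, Int.fib (k - 1)) ?_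
  simp only [zpow_eq_fib_mul_add_fib_sub_one Real.goldenRatio_sq, sum_add_distrib,
    ← sum_mul] at hN
  push_cast
  linear_combination hN

lemma abs_goldenConj_add_sq : |ψ| + ψ ^ 2 = 1 := by
  rw [abs_of_neg Real.goldenConj_neg, Real.goldenConj_sq, neg_add_cancel_left]

/-- A finite set of integers containing no two consecutive integers: the exponents of an expansion
in base `φ` without adjacent digits `1`. -/
def NoConsecutive (T : Finset ℤ) : Prop := ∀ k ∈ T, k + 1 ∉ T

namespace NoConsecutive

variable {S T : Finset ℤ} {i m : ℤ}

lemma mono (hT : NoConsecutive T) (hST : S ⊆ T) : NoConsecutive S :=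
  fun k hk hk' => hT k (hST hk) (hST hk')

lemma neg (hT : NoConsecutive T) : NoConsecutive (-T) := by
  intro k hk hk'
  rw [mem_neg'] at hk hk'
  exact hT _ hk' (by simpa using hk)

variable {K : Type*} [Field K] [LinearOrder K] [IsStrictOrderedRing K] {x y : K}

lemma sum_zpow_lt_zpow_add_one (hT : NoConsecutive T) (hx0 : 0 < x) (hx : x + 1 ≤ x ^ 2)
    (hm : ∀ k ∈ T, k ≤ m) : ∑ k ∈ T, x ^ k < x ^ (m + 1) := by
  induction T using Finset.induction_on_max generalizing m with
  | empty => simpa using zpow_pos hx0 (m + 1)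
  | insert a s hs ih =>
    have hx1 : 1 ≤ x := by nlinarith
    have hs_le : ∀ k ∈ s, k ≤ a - 2 := fun k hk => by
      have hka : k + 1 ≠ a := fun h => hT k (mem_insert_of_mem hk) (by simp [h])
      have := hs k hk
      lia
    have hs_lt : ∑ k ∈ s, x ^ k < x ^ (a - 1) := by
      convert ih (hT.mono (subset_insert a s)) hs_le using 2
      ring
    calc ∑ k ∈ insert a s, x ^ k
        = x ^ a + ∑ k ∈ s, x ^ k := sum_insert fun h => (hs a h).false
      _ < x ^ a + x ^ (a - 1) := by gcongr
      _ = x ^ (a - 1) * (x + 1) := by rw [mul_add_one, ← zpow_add_one₀ hx0.ne', sub_add_cancel]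
      _ ≤ x ^ (a - 1) * x ^ 2 := by gcongr
      _ = x ^ (a + 1) := by rw [← zpow_natCast, ← zpow_add₀ hx0.ne']; congr 1; lia
      _ ≤ x ^ (m + 1) := zpow_le_zpow_right₀ hx1 (by simpa using hm a (mem_insert_self a s))

lemma sum_zpow_lt_zpow_sub_one (hT : NoConsecutive T) (hx0 : 0 < x) (hx : x + x ^ 2 ≤ 1)
    (hm : ∀ k ∈ T, m ≤ k) : ∑ k ∈ T, x ^ k < x ^ (m - 1) := by
  have hinv : x⁻¹ + 1 ≤ x⁻¹ ^ 2 := by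
    field_simp
    linarith
  have hneg : ∀ k ∈ -T, k ≤ -m := fun k hk => by
    have := hm _ (mem_neg'.1 hk)
    lia
  have hlt := hT.neg.sum_zpow_lt_zpow_add_one (inv_pos.2 hx0) hinv hneg
  simpa only [sum_neg_index, inv_zpow', neg_neg, neg_add, ← sub_eq_add_neg] using hlt

lemma abs_sum_zpow_lt (hT : NoConsecutive T) (hy0 : y ≠ 0) (hy : |y| + y ^ 2 ≤ 1)
    (hm : ∀ k ∈ T, m ≤ k) : |∑ k ∈ T, y ^ k| < |y| ^ (m - 1) :=
  calc |∑ k ∈ T, y ^ k|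
      ≤ ∑ k ∈ T, |y ^ k| := abs_sum_le_sum_abs _ _
    _ = ∑ k ∈ T, |y| ^ k := by simp only [abs_zpow]
    _ < |y| ^ (m - 1) := hT.sum_zpow_lt_zpow_sub_one (abs_pos.2 hy0) (by rwa [sq_abs]) hm

lemma abs_sum_zpow_sub_zpow_lt (hT : NoConsecutive T) (hy0 : y ≠ 0) (hy : |y| + y ^ 2 ≤ 1)
    (hi : IsLeast (T : Set ℤ) i) : |∑ k ∈ T, y ^ k - y ^ i| < |y ^ i| := by
  have herase : ∀ k ∈ T.erase i, i + 1 ≤ k := fun k hk =>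
    (hi.2 (mem_of_mem_erase hk)).lt_of_ne' (ne_of_mem_erase hk)
  rw [← add_sum_erase T _ hi.1, add_sub_cancel_left, abs_zpow]
  simpa using (hT.mono (erase_subset i T)).abs_sum_zpow_lt hy0 hy herase

lemma sum_zpow_pos_of_even (hT : NoConsecutive T) (hy0 : y ≠ 0) (hy : |y| + y ^ 2 ≤ 1)
    (hi : IsLeast (T : Set ℤ) i) (heven : Even i) : 0 < ∑ k ∈ T, y ^ k := by
  have hlt := hT.abs_sum_zpow_sub_zpow_lt hy0 hy hi
  rw [abs_of_pos (heven.zpow_pos hy0)] at hlt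
  linarith [(abs_lt.1 hlt).1]

lemma sum_zpow_neg_of_odd (hT : NoConsecutive T) (hy0 : y < 0) (hy : |y| + y ^ 2 ≤ 1)
    (hi : IsLeast (T : Set ℤ) i) (hodd : Odd i) : ∑ k ∈ T, y ^ k < 0 := by
  have hlt := hT.abs_sum_zpow_sub_zpow_lt hy0.ne hy hi
  rw [abs_of_neg (hodd.zpow_neg hy0)] at hlt
  linarith [(abs_lt.1 hlt).2]

lemma sum_goldenRatio_zpow_lt_one (hT : NoConsecutive T) (hneg : ∀ k ∈ T, k < 0) :
    ∑ k ∈ T, φ ^ k < 1 := by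
  have hle : ∀ k ∈ T, k ≤ -1 := fun k hk => Int.le_sub_one_of_lt (hneg k hk)
  simpa using hT.sum_zpow_lt_zpow_add_one Real.goldenRatio_pos Real.goldenRatio_sq.ge hle

lemma abs_sum_goldenConj_zpow_lt_one (hT : NoConsecutive T) (hpos : ∀ k ∈ T, 0 < k) :
    |∑ k ∈ T, ψ ^ k| < 1 := by
  simpa using hT.abs_sum_zpow_lt Real.goldenConj_ne_zero abs_goldenConj_add_sq.le hpos

lemma abs_sum_goldenRatio_sub_sum_goldenConj_sub_ite_odd_lt_one (hS : NoConsecutive S)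
    (hSneg : ∀ k ∈ S, k < 0) (hT : NoConsecutive T) (hi : IsLeast (T : Set ℤ) i) (hi0 : 0 < i) :
    |∑ k ∈ S, φ ^ k - ∑ k ∈ T, ψ ^ k - if Odd i then 1 else 0| < 1 := by
  have hS_nonneg : 0 ≤ ∑ k ∈ S, φ ^ k := by positivity
  have hS_lt := hS.sum_goldenRatio_zpow_lt_one hSneg
  obtain ⟨hT_gt, hT_lt⟩ := abs_lt.1 <|
    hT.abs_sum_goldenConj_zpow_lt_one fun k hk => hi0.trans_le (hi.2 hk)
  rw [abs_lt]
  split_ifs with hodd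
  · have hT_neg := hT.sum_zpow_neg_of_odd Real.goldenConj_neg abs_goldenConj_add_sq.le hi hodd
    constructor <;> linarith
  · have hT_pos := hT.sum_zpow_pos_of_even Real.goldenConj_ne_zero abs_goldenConj_add_sq.le hi
      (Int.not_odd_iff_even.1 hodd)
    constructor <;> linarith

end NoConsecutive

lemma goldenPhi_eq_goldenRatio : goldenPhi = φ := rfl

lemma goldenPhiBar_eq_goldenConj : goldenPhiBar = ψ := rfl

/-- If `S` is a finite set of integers with no two consecutive elements whose
φ-power sum is an integer, and `i` is the smallest positive element of `S`, then
`Σ_{k∈S, k<0} φ^k − Σ_{k∈S, k>0} φ̄^k` equals 1 if `i` is odd and 0 if `i` is even. -/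
theorem stmt_12 (S : Finset ℤ)
    (hnc : ∀ k ∈ S, k + 1 ∉ S)
    (hint : ∃ N : ℤ, (∑ k ∈ S, goldenPhi ^ k) = (N : ℝ))
    (i : ℤ) (hiS : i ∈ S) (hipos : 0 < i)
    (hmin : ∀ j ∈ S, 0 < j → i ≤ j) :
    (∑ k ∈ S.filter (fun k => k < 0), goldenPhi ^ k) -
      (∑ k ∈ S.filter (fun k => 0 < k), goldenPhiBar ^ k) =
      if Odd i then 1 else 0 := by
  rw [goldenPhi_eq_goldenRatio] at hint ⊢
  rw [goldenPhiBar_eq_goldenConj]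
  obtain ⟨N, hN⟩ := hint
  have hintegral := sum_neg_zpow_sub_sum_pos_zpow_eq_intCast Real.goldenRatio_sq
    Real.goldenRatio_add_goldenConj (sum_fib_eq_zero_of_sum_goldenRatio_zpow_eq_intCast hN)
  have hneg : NoConsecutive {k ∈ S | k < 0} := NoConsecutive.mono hnc (filter_subset _ _)
  have hpos : NoConsecutive {k ∈ S | 0 < k} := NoConsecutive.mono hnc (filter_subset _ _)
  have hneg_lt : ∀ k ∈ {k ∈ S | k < 0}, k < 0 := fun k hk => (mem_filter.1 hk).2
  have hleast : IsLeast ({k ∈ S | 0 < k} : Finset ℤ) i :=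
    ⟨by simp [hiS, hipos], fun k hk => hmin k (mem_filter.1 hk).1 (mem_filter.1 hk).2⟩
  have hlt :=
    hneg.abs_sum_goldenRatio_sub_sum_goldenConj_sub_ite_odd_lt_one hneg_lt hpos hleast hipos
  rw [hintegral] at hlt ⊢
  norm_cast at hlt ⊢
  exact sub_eq_zero.1 (Int.abs_lt_one_iff.1 hlt)
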